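/- For all vertices i and j of G, the distance from i to j satisfies ‖ij‖ = deg*_x( adj(SA(G))_{i,j} ). In particular, adj(SA(G))_{i,j} = 0 if and only if j is unreachable from i. -/

import Mathlib

/-- The length of a walk `p` (a list of vertices) in the weighted digraph with
weight function `W`, i.e. the sum of the weights of consecutive pairs. -/
def walkLen {V : Type*} (W : V → V → ℕ∞) (p : List V) : ℕ∞ :=
  ((p.zip p.tail).map fun q => W q.1 q.2).sum

/-- `p` is a walk from `u` to `v`: it is nonempty, starts at `u`, ends at `v`,
and every consecutive pair is an edge (finite weight). -/
def IsWalk {V : Type*} (W : V → V → ℕ∞) (u v : V) (p : List V) : Prop :=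
  p.head? = some u ∧ p.getLast? = some v ∧ p.Chain' fun x y => W x y ≠ ⊤

/-- The distance from `u` to `v`: the infimum of lengths of walks from `u` to `v`
(`⊤` if there is no walk). -/
noncomputable def gdist {V : Type*} (W : V → V → ℕ∞) (u v : V) : ℕ∞ :=
  sInf {d | ∃ p, IsWalk W u v p ∧ walkLen W p = d}

/-- `p` is a shortest path from `u` to `v`: a walk from `u` to `v` whose length
equals the distance. -/
def IsShortestPath {V : Type*} (W : V → V → ℕ∞) (u v : V) (p : List V) : Prop :=
  IsWalk W u v p ∧ walkLen W p = gdist W u v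

/-- The symbolic adjacency matrix of the digraph on `Fin n` with weight function `W`
(`W i j = ⊤` meaning no edge), over the polynomial ring `𝔽[x][z_{i,j}]`,
realized as polynomials in `x` with coefficients in the multivariate polynomial
ring in the variables `z_{i,j}` (indexed by pairs `(i, j)`). -/
noncomputable def symbAdj {F : Type*} [Field F] {n : ℕ} (W : Fin n → Fin n → ℕ∞) :
    Matrix (Fin n) (Fin n) (Polynomial (MvPolynomial (Fin n × Fin n) F)) :=
  fun i j =>
    if i = j then 1
    else if W i j ≠ ⊤ then
      Polynomial.C (MvPolynomial.X (i, j)) * Polynomial.X ^ (W i j).toNat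
    else 0

/-!
Lower bound: conjugating by a diagonal matrix `diag (X ^ p a)` shows that if the entries of a matrix
satisfy `X ^ p a ∣ A a b * X ^ p b`, then so do the entries of its adjugate. This applies to
`p a = min ‖aj‖ N`, for every `N`, by the triangle inequality.

Upper bound: specialise the `z a b` to `-1` on the arcs of a shortest-path tree towards `j` and to
`0` elsewhere. The resulting matrix is unitriangular and maps the vector `(X ^ ‖aj‖)ₐ` to the `j`-th
basis vector, so this vector is the `j`-th column of its adjugate. Specialisation can only raise the
trailing degree.
-/

open Polynomial

section Distance

variable {V : Type*} {W : V → V → ℕ∞} {u v a b : V} {p t : List V}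

theorem walkLen_cons_cons (W : V → V → ℕ∞) (a b : V) (t : List V) :
    walkLen W (a :: b :: t) = W a b + walkLen W (b :: t) := by
  simp [walkLen]

theorem isWalk_singleton (W : V → V → ℕ∞) (u : V) : IsWalk W u u [u] :=
  ⟨rfl, rfl, List.isChain_singleton u⟩

theorem IsWalk.exists_eq_cons (h : IsWalk W u v p) : ∃ t, p = u :: t :=
  ⟨p.tail, List.eq_cons_of_mem_head? h.1⟩

theorem isWalk_cons_cons :
    IsWalk W u v (u :: b :: t) ↔ W u b ≠ ⊤ ∧ IsWalk W b v (b :: t) := by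
  constructor
  · rintro ⟨-, hlast, hchain⟩
    obtain ⟨hub, hchain⟩ := List.isChain_cons_cons.1 hchain
    exact ⟨hub, rfl, hlast, hchain⟩
  · rintro ⟨hub, -, hlast, hchain⟩
    exact ⟨rfl, hlast, List.isChain_cons_cons.2 ⟨hub, hchain⟩⟩

theorem gdist_le_walkLen (h : IsWalk W u v p) : gdist W u v ≤ walkLen W p :=
  sInf_le ⟨p, h, rfl⟩

theorem exists_isShortestPath (h : gdist W u v ≠ ⊤) : ∃ p, IsShortestPath W u v p := by
  have hne : {d | ∃ p, IsWalk W u v p ∧ walkLen W p = d}.Nonempty := by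
    by_contra hempty
    rw [Set.not_nonempty_iff_eq_empty] at hempty
    exact h (by rw [gdist, hempty, sInf_empty])
  exact csInf_mem hne

theorem gdist_self (W : V → V → ℕ∞) (u : V) : gdist W u u = 0 :=
  nonpos_iff_eq_zero.1 ((gdist_le_walkLen (isWalk_singleton W u)).trans_eq (by simp [walkLen]))

theorem gdist_le_add (W : V → V → ℕ∞) (u b v : V) : gdist W u v ≤ W u b + gdist W b v := by
  by_cases hub : W u b = ⊤
  · simp [hub]
  by_cases hbv : gdist W b v = ⊤
  · simp [hbv]
  obtain ⟨p, hp, hlen⟩ := exists_isShortestPath hbv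
  obtain ⟨t, rfl⟩ := hp.exists_eq_cons
  rw [← hlen, ← walkLen_cons_cons]
  exact gdist_le_walkLen (isWalk_cons_cons.2 ⟨hub, hp⟩)

theorem IsShortestPath.gdist_eq_add (h : IsShortestPath W u v (u :: b :: t)) :
    gdist W u v = W u b + gdist W b v := by
  refine (gdist_le_add W u b v).antisymm ?_
  rw [← h.2, walkLen_cons_cons]
  gcongr
  exact gdist_le_walkLen (isWalk_cons_cons.1 h.1).2

theorem IsShortestPath.tail (h : IsShortestPath W u v (u :: b :: t)) :
    IsShortestPath W b v (b :: t) := by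
  obtain ⟨hub, hwalk⟩ := isWalk_cons_cons.1 h.1
  have hlen : W u b + walkLen W (b :: t) = W u b + gdist W b v := by
    rw [← walkLen_cons_cons, h.2, h.gdist_eq_add]
  exact ⟨hwalk, ENat.add_right_injective_of_ne_top hub hlen⟩

/-- The least number of vertices on a shortest path from `u` to `v` (`0` if there is no path). It
decreases along shortest paths with the fewest vertices, even where arcs of weight `0` leave the
distance to `v` unchanged. -/
noncomputable def shortestPathOrder (W : V → V → ℕ∞) (u v : V) : ℕ :=
  sInf (List.length '' {p | IsShortestPath W u v p})

theorem exists_gdist_eq_add_and_shortestPathOrder_lt (huv : u ≠ v) (h : gdist W u v ≠ ⊤) :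
    ∃ b, gdist W u v = W u b + gdist W b v ∧
      shortestPathOrder W b v < shortestPathOrder W u v := by
  have hne : {p | IsShortestPath W u v p}.Nonempty := exists_isShortestPath h
  obtain ⟨p, hp, hlen⟩ := Nat.sInf_mem (hne.image List.length)
  obtain ⟨_ | ⟨b, t⟩, rfl⟩ := hp.1.exists_eq_cons
  · exact absurd (by simpa using hp.1.2.1) huv
  · refine ⟨b, hp.gdist_eq_add, ?_⟩
    calc
      shortestPathOrder W b v ≤ (b :: t).length := Nat.sInf_le ⟨_, hp.tail, rfl⟩
      _ < (u :: b :: t).length := Nat.lt_succ_self _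
      _ = shortestPathOrder W u v := hlen

/-- `next` is the parent function of a shortest-path tree towards the root `j`: it has value `none`
at the root and at vertices that cannot reach it, and otherwise gives the second vertex of a
shortest path to `j`. -/
structure IsShortestPathTree (W : V → V → ℕ∞) (j : V) (next : V → Option V) : Prop where
  next_eq_none_iff : ∀ a, next a = none ↔ a = j ∨ gdist W a j = ⊤
  gdist_eq_add : ∀ a b, next a = some b → gdist W a j = W a b + gdist W b j
  acyclic : ∃ r : V → ℕ, ∀ a b, next a = some b → r b < r a

theorem exists_isShortestPathTree (W : V → V → ℕ∞) (j : V) :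
    ∃ next, IsShortestPathTree W j next := by
  classical
  have : Nonempty V := ⟨j⟩
  choose! next hnext using fun (a : V) (haj : a ≠ j) (ha : gdist W a j ≠ ⊤) ↦
    exists_gdist_eq_add_and_shortestPathOrder_lt haj ha
  have of_eq_some {a b : V}
      (h : (if a = j ∨ gdist W a j = ⊤ then none else some (next a)) = some b) :
      gdist W a j = W a b + gdist W b j ∧ shortestPathOrder W b j < shortestPathOrder W a j := by
    split_ifs at h with ha
    obtain ⟨haj, hreach⟩ := not_or.1 ha
    exact Option.some.inj h ▸ hnext a haj hreach
  exact ⟨fun a ↦ if a = j ∨ gdist W a j = ⊤ then none else some (next a),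
    { next_eq_none_iff := by simp [or_iff_not_imp_left]
      gdist_eq_add := fun _ _ h ↦ (of_eq_some h).1
      acyclic := ⟨(shortestPathOrder W · j), fun _ _ h ↦ (of_eq_some h).2⟩ }⟩

end Distance

section ENatPow

variable {R S : Type*}

/-- The monomial `X ^ e` for an extended natural number `e`, with `X ^ ⊤ = 0`; this is the entry
contributed by an arc of weight `e`. -/
noncomputable def enatPow (R : Type*) [Semiring R] (e : ℕ∞) : R[X] :=
  if e = ⊤ then 0 else X ^ e.toNat

@[simp]
theorem enatPow_top [Semiring R] : enatPow R ⊤ = 0 := if_pos rfl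

@[simp]
theorem enatPow_natCast [Semiring R] (n : ℕ) : enatPow R n = X ^ n := by
  simp [enatPow]

theorem enatPow_add [Semiring R] (e f : ℕ∞) : enatPow R (e + f) = enatPow R e * enatPow R f := by
  induction e using ENat.recTopCoe with
  | top => simp
  | coe m =>
    induction f using ENat.recTopCoe with
    | top => simp
    | coe n => rw [← Nat.cast_add]; simp only [enatPow_natCast, pow_add]

theorem map_enatPow [Semiring R] [Semiring S] (φ : R →+* S) (e : ℕ∞) :
    (enatPow R e).map φ = enatPow S e := by
  induction e using ENat.recTopCoe <;> simp

theorem trailingDegree_enatPow [Semiring R] [Nontrivial R] (e : ℕ∞) :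
    (enatPow R e).trailingDegree = e := by
  induction e using ENat.recTopCoe <;> simp [trailingDegree_X_pow]

theorem X_pow_dvd_enatPow [Semiring R] {n : ℕ} {e : ℕ∞} (h : n ≤ e) : X ^ n ∣ enatPow R e := by
  induction e using ENat.recTopCoe with
  | top => simp
  | coe m => simpa using pow_dvd_pow X (Nat.cast_le.1 h)

theorem le_trailingDegree_of_X_pow_dvd [Semiring R] {n : ℕ} {p : R[X]} (h : X ^ n ∣ p) :
    n ≤ p.trailingDegree := by
  obtain ⟨q, rfl⟩ := h
  exact (le_trailingDegree_X_pow n).trans (le_self_add.trans le_trailingDegree_mul)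

theorem trailingDegree_le_trailingDegree_map [Semiring R] [Semiring S] (φ : R →+* S) (p : R[X]) :
    p.trailingDegree ≤ (p.map φ).trailingDegree := by
  exact Finset.min_mono (support_map_subset φ p)

end ENatPow

section Adjugate

open scoped nonZeroDivisors

variable {V R : Type*} [Fintype V] [DecidableEq V] [CommRing R]

/- With `D = diagonal d` the hypothesis reads `A * D = D * B`, whence
`adjugate D * adjugate A = adjugate B * adjugate D`; multiply by `D` on both sides. -/
theorem dvd_adjugate_mul {A : Matrix V V R} {d : V → R} (hd : ∀ a, d a ∈ R⁰)
    (h : ∀ a b, d a ∣ A a b * d b) (a b : V) : d a ∣ A.adjugate a b * d b := by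
  choose B hB using h
  set D := Matrix.diagonal d with hD
  have hAD : A * D = D * Matrix.of B := by
    ext a b
    simpa [hD] using hB a b
  have hdet : D.det ∈ R⁰ := by
    rw [hD, Matrix.det_diagonal]
    exact prod_mem fun a _ ↦ hd a
  have hsmul : D.det • (A.adjugate * D) = D.det • (D * (Matrix.of B).adjugate) :=
    calc
      D.det • (A.adjugate * D) = D * (D.adjugate * A.adjugate) * D := by
        rw [← Matrix.mul_assoc, Matrix.mul_adjugate, Matrix.smul_mul, Matrix.one_mul,
          Matrix.smul_mul]
      _ = D * ((Matrix.of B).adjugate * D.adjugate) * D := by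
        rw [← Matrix.adjugate_mul_distrib, hAD, Matrix.adjugate_mul_distrib]
      _ = D.det • (D * (Matrix.of B).adjugate) := by
        rw [Matrix.mul_assoc, Matrix.mul_assoc, Matrix.adjugate_mul, Matrix.mul_smul,
          Matrix.mul_one, Matrix.mul_smul]
  have hentry := congrFun (congrFun hsmul a) b
  simp only [Matrix.smul_apply, smul_eq_mul, hD, Matrix.mul_diagonal,
    Matrix.diagonal_mul] at hentry
  exact ⟨_, (mul_cancel_left_mem_nonZeroDivisors hdet).1 hentry⟩

theorem adjugate_apply_eq_det_mul_of_mulVec_eq_single {A : Matrix V V R} {v : V → R} {j : V}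
    (h : A.mulVec v = Pi.single j 1) (i : V) : A.adjugate i j = A.det * v i := by
  have hcol : A.adjugate.mulVec (A.mulVec v) = A.adjugate.col j := by
    rw [h, Matrix.mulVec_single_one]
  rw [Matrix.mulVec_mulVec, Matrix.adjugate_mul, Matrix.smul_mulVec, Matrix.one_mulVec] at hcol
  exact (congrFun hcol i).symm

theorem det_one_sub_eq_one_of_rank_lt {α : Type*} [LinearOrder α] {N : Matrix V V R} (r : V → α)
    (h : ∀ a b, N a b ≠ 0 → r b < r a) : (1 - N).det = 1 := by
  have hzero {a b : V} (hab : r a ≤ r b) : N a b = 0 :=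
    not_imp_comm.1 (h a b) hab.not_gt
  have htri : (1 - N).BlockTriangular (OrderDual.toDual ∘ r) := by
    intro a b hab
    have hlt : r a < r b := hab
    simp [hzero hlt.le, Matrix.one_apply_ne (ne_of_apply_ne r hlt.ne)]
  have hblock (k : αᵒᵈ) : (1 - N).toSquareBlock (OrderDual.toDual ∘ r) k = 1 := by
    ext a b
    have hab : r a = r b := OrderDual.toDual.injective (a.2.trans b.2.symm)
    simp [Matrix.toSquareBlock_def, hzero hab.le, Matrix.one_apply, Subtype.ext_iff]
  simp [htri.det, hblock]

end Adjugate

section SymbolicAdjacency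

variable {V R : Type*} [DecidableEq V] [CommRing R] {W : V → V → ℕ∞}

/-- The symbolic adjacency matrix `SA(G)` over an arbitrary vertex type and coefficient ring; it is
`symbAdj` for the vertex set `Fin n` and a coefficient field. -/
noncomputable def symbolicAdjMatrix (R : Type*) [CommRing R] (W : V → V → ℕ∞) :
    Matrix V V (MvPolynomial (V × V) R)[X] :=
  Matrix.of fun a b ↦ if a = b then 1 else C (MvPolynomial.X (a, b)) * enatPow _ (W a b)

theorem symbAdj_eq_symbolicAdjMatrix {F : Type*} [Field F] {n : ℕ} (W : Fin n → Fin n → ℕ∞) :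
    symbAdj (F := F) W = symbolicAdjMatrix F W := by
  ext1 a b
  by_cases h : W a b = ⊤ <;> simp [symbAdj, symbolicAdjMatrix, enatPow, h]

/-- The weighted adjacency matrix of the forest with parent function `next`: the only nonzero entry
of row `a` is `X ^ W a b`, in column `b`, where `b` is the parent of `a`. -/
noncomputable def treeMatrix (R : Type*) [CommRing R] (W : V → V → ℕ∞) (next : V → Option V) :
    Matrix V V R[X] :=
  Matrix.of fun a b ↦ if next a = some b then enatPow R (W a b) else 0

variable [Fintype V] {j : V} {next : V → Option V}

theorem le_trailingDegree_adjugate_symbolicAdjMatrix (W : V → V → ℕ∞) (i j : V) :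
    gdist W i j ≤ ((symbolicAdjMatrix R W).adjugate i j).trailingDegree := by
  rw [← ENat.forall_natCast_le_iff_le]
  intro N hN
  set p : V → ℕ := fun a ↦ (min (gdist W a j) N).toNat
  have hp (a : V) : (p a : ℕ∞) = min (gdist W a j) N :=
    ENat.natCast_toNat (ne_top_of_le_ne_top (ENat.natCast_ne_top N) (min_le_right _ _))
  have hpi : p i = N := by simp [p, hN]
  have hpj : p j = 0 := by simp [p, gdist_self]
  have hstep (a b : V) : (p a : ℕ∞) ≤ W a b + p b := by
    rw [hp, hp, add_min]
    exact min_le_min (gdist_le_add W a b j) le_add_self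
  have hdvd (a b : V) : X ^ p a ∣ symbolicAdjMatrix R W a b * X ^ p b := by
    by_cases hab : a = b
    · simp [symbolicAdjMatrix, hab]
    · rw [symbolicAdjMatrix, Matrix.of_apply, if_neg hab, mul_assoc, ← enatPow_natCast (p b),
        ← enatPow_add]
      exact (X_pow_dvd_enatPow (hstep a b)).mul_left _
  have hadj := dvd_adjugate_mul (fun a ↦ (monic_X_pow (p a)).mem_nonZeroDivisors) hdvd i j
  rw [hpi, hpj, pow_zero, mul_one] at hadj
  exact le_trailingDegree_of_X_pow_dvd hadj

theorem treeMatrix_mulVec_apply_of_eq_some {a b : V} (h : next a = some b) (v : V → R[X]) :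
    (treeMatrix R W next).mulVec v a = enatPow R (W a b) * v b := by
  simp [Matrix.mulVec, dotProduct, treeMatrix, h]

theorem treeMatrix_mulVec_apply_of_eq_none {a : V} (h : next a = none) (v : V → R[X]) :
    (treeMatrix R W next).mulVec v a = 0 := by
  simp [Matrix.mulVec, dotProduct, treeMatrix, h]

namespace IsShortestPathTree

theorem det_one_sub_treeMatrix (h : IsShortestPathTree W j next) :
    (1 - treeMatrix R W next).det = 1 := by
  obtain ⟨r, hr⟩ := h.acyclic
  refine det_one_sub_eq_one_of_rank_lt r fun a b hab ↦ hr a b ?_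
  by_contra hne
  exact hab (if_neg hne)

theorem one_sub_treeMatrix_mulVec (h : IsShortestPathTree W j next) :
    (1 - treeMatrix R W next).mulVec (fun a ↦ enatPow R (gdist W a j)) = Pi.single j 1 := by
  ext1 a
  rw [Matrix.sub_mulVec, Matrix.one_mulVec, Pi.sub_apply]
  cases hnext : next a with
  | some b =>
    have haj : a ≠ j := by
      rintro rfl
      simp [(h.next_eq_none_iff a).2 (Or.inl rfl)] at hnext
    rw [treeMatrix_mulVec_apply_of_eq_some hnext, ← enatPow_add, ← h.gdist_eq_add a b hnext,
      sub_self, Pi.single_eq_of_ne haj]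
  | none =>
    rw [treeMatrix_mulVec_apply_of_eq_none hnext, sub_zero]
    obtain rfl | haj := eq_or_ne a j
    · simpa [gdist_self] using enatPow_natCast (R := R) 0
    · rw [((h.next_eq_none_iff a).1 hnext).resolve_left haj, enatPow_top, Pi.single_eq_of_ne haj]

theorem adjugate_one_sub_treeMatrix_apply (h : IsShortestPathTree W j next) (i : V) :
    (1 - treeMatrix R W next).adjugate i j = enatPow R (gdist W i j) := by
  rw [adjugate_apply_eq_det_mul_of_mulVec_eq_single h.one_sub_treeMatrix_mulVec,
    h.det_one_sub_treeMatrix, one_mul]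

theorem map_symbolicAdjMatrix (h : IsShortestPathTree W j next) :
    (mapRingHom (MvPolynomial.eval fun q ↦ if next q.1 = some q.2 then -1 else 0)).mapMatrix
      (symbolicAdjMatrix R W) = 1 - treeMatrix R W next := by
  obtain ⟨r, hr⟩ := h.acyclic
  ext1 a b
  by_cases hab : a = b
  · have hloop : next b ≠ some b := fun hb ↦ (hr b b hb).false
    simp [symbolicAdjMatrix, treeMatrix, hab, hloop]
  · by_cases hnext : next a = some b <;>
      simp [symbolicAdjMatrix, treeMatrix, hab, hnext, map_enatPow]

end IsShortestPathTree

theorem trailingDegree_adjugate_symbolicAdjMatrix_le [Nontrivial R] (W : V → V → ℕ∞) (i j : V) :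
    ((symbolicAdjMatrix R W).adjugate i j).trailingDegree ≤ gdist W i j := by
  obtain ⟨next, htree⟩ := exists_isShortestPathTree W j
  set φ : MvPolynomial (V × V) R →+* R :=
    MvPolynomial.eval fun q ↦ if next q.1 = some q.2 then -1 else 0
  have hspec : ((symbolicAdjMatrix R W).adjugate i j).map φ = enatPow R (gdist W i j) := by
    rw [← htree.adjugate_one_sub_treeMatrix_apply, ← htree.map_symbolicAdjMatrix,
      ← RingHom.map_adjugate]
    rfl
  calc
    _ ≤ (((symbolicAdjMatrix R W).adjugate i j).map φ).trailingDegree :=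
      trailingDegree_le_trailingDegree_map φ _
    _ = gdist W i j := by rw [hspec, trailingDegree_enatPow]

end SymbolicAdjacency

theorem dist_eq_trailingDegree_adjugate_symbAdj_general {V R : Type*} [Fintype V] [DecidableEq V]
    [CommRing R] [Nontrivial R] (W : V → V → ℕ∞) (i j : V) :
    gdist W i j = ((symbolicAdjMatrix R W).adjugate i j).trailingDegree ∧
      ((symbolicAdjMatrix R W).adjugate i j = 0 ↔ gdist W i j = ⊤) := by
  have hdist : gdist W i j = ((symbolicAdjMatrix R W).adjugate i j).trailingDegree :=
    (le_trailingDegree_adjugate_symbolicAdjMatrix W i j).antisymm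
      (trailingDegree_adjugate_symbolicAdjMatrix_le W i j)
  exact ⟨hdist, by rw [hdist, trailingDegree_eq_top]⟩

theorem dist_eq_trailingDegree_adjugate_symbAdj {F : Type*} [Field F] {n : ℕ}
    (W : Fin n → Fin n → ℕ∞) (hpos : ∀ i j, W i j ≠ 0) (hloop : ∀ i, W i i = ⊤)
    (i j : Fin n) :
    gdist W i j = ((symbAdj (F := F) W).adjugate i j).trailingDegree ∧
      ((symbAdj (F := F) W).adjugate i j = 0 ↔ gdist W i j = ⊤) := by
  rw [symbAdj_eq_symbolicAdjMatrix]
  exact dist_eq_trailingDegree_adjugate_symbAdj_general W i j
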